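/- Let m ≥ 3 be an integer and let Q = Q_m ∈ (0,1) satisfy 1 + Q^m − ((1−Q²)/2)m = 0. Let (a_n)_{n≥2} be a sequence of real numbers. Then the system [a₂ = 0, a₃ = 0, and (1 + Qⁿ − ((1−Q²)/2)n)·(a_{n+1} − Q a_{n−1}) = 0 for every n ≥ 3] holds if and only if there exists c ∈ ℝ such that a_{m+1+2k} = c·Q^k for every integer k ≥ 0 and a_n = 0 for every other index n ≥ 2. In particular the solution set is a one-dimensional real vector space, corresponding to the kernel functions c·w^{m+1}/(1 − Qw²) = c·Σ_{k≥0} Q^k w^{m+1+2k}. -/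

import Mathlib

/-!
For `Q ∈ (0, 1)` the dispersion function `1 + Qⁿ - ((1 - Q²)/2) n` is strictly decreasing in `n`,
so its root `m` is unique and the system is the recurrence `a (n + 2) = Q * a n` with the single
link from `a (m - 1)` to `a (m + 1)` cut. Below the cut, and along the other parity, the initial
values `a 2 = a 3 = 0` propagate; above it `a (m + 1)` is free and generates a geometric sequence.
-/

section Recurrence

variable {R : Type*}

/-- The indices `m + 1, m + 3, m + 5, …` at which a solution of the system resonant at `m` may be
nonzero. -/
def resonantIndices (m : ℕ) : Set ℕ :=
  {n | ∃ k : ℕ, n = m + 1 + 2 * k}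

theorem add_two_mem_resonantIndices_iff {m n : ℕ} :
    n + 2 ∈ resonantIndices m ↔ n + 1 = m ∨ n ∈ resonantIndices m := by
  constructor
  · rintro ⟨_ | k, hk⟩
    · exact .inl (by lia)
    · exact .inr ⟨k, by lia⟩
  · rintro (h | ⟨k, hk⟩)
    · exact ⟨0, by lia⟩
    · exact ⟨k + 1, by lia⟩

theorem notMem_resonantIndices_of_le {m n : ℕ} (h : n ≤ m) : n ∉ resonantIndices m := by
  rintro ⟨k, hk⟩
  lia

theorem mul_sub_eq_zero_iff_recurrence [Ring R] [NoZeroDivisors R] {d a : ℕ → R} {Q : R} {m : ℕ}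
    (hd : ∀ n, 3 ≤ n → (d n = 0 ↔ n = m)) :
    (∀ n, 3 ≤ n → d n * (a (n + 1) - Q * a (n - 1)) = 0) ↔
      ∀ n, 2 ≤ n → n + 1 ≠ m → a (n + 2) = Q * a n := by
  constructor
  · intro hsystem n hn hnm
    have hdn : d (n + 1) ≠ 0 := (hd (n + 1) (by lia)).not.mpr hnm
    exact sub_eq_zero.mp ((mul_eq_zero.mp (hsystem (n + 1) (by lia))).resolve_left hdn)
  · intro hrec n hn
    obtain ⟨n, rfl⟩ : ∃ p, n = p + 1 := ⟨n - 1, by lia⟩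
    rw [mul_eq_zero, hd _ hn, sub_eq_zero]
    exact or_iff_not_imp_left.mpr (hrec n (by lia))

theorem eq_mul_pow_of_recurrence [CommMonoid R] {a : ℕ → R} {Q : R} {s : ℕ}
    (hrec : ∀ n, s ≤ n → a (n + 2) = Q * a n) (k : ℕ) : a (s + 2 * k) = a s * Q ^ k := by
  induction k with
  | zero => simp
  | succ k ih =>
    calc a (s + 2 * k + 2) = Q * a (s + 2 * k) := hrec _ (by lia)
      _ = a s * Q ^ (k + 1) := by rw [ih, pow_succ', mul_left_comm]

theorem eq_zero_of_recurrence_of_notMem_resonantIndices [MulZeroClass R] {a : ℕ → R} {Q : R}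
    {m : ℕ} (h2 : a 2 = 0) (h3 : a 3 = 0)
    (hrec : ∀ n, 2 ≤ n → n + 1 ≠ m → a (n + 2) = Q * a n) :
    ∀ n, 2 ≤ n → n ∉ resonantIndices m → a n = 0
  | 2, _, _ => h2
  | 3, _, _ => h3
  | n + 4, _, hn => by
    obtain ⟨hnm, hn'⟩ := not_or.mp (add_two_mem_resonantIndices_iff.not.mp hn)
    rw [hrec (n + 2) (by lia) hnm,
      eq_zero_of_recurrence_of_notMem_resonantIndices h2 h3 hrec (n + 2) (by lia) hn', mul_zero]

theorem recurrence_of_geometric [CommMonoidWithZero R] {a : ℕ → R} {Q c : R} {m : ℕ}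
    (hgeom : ∀ k, a (m + 1 + 2 * k) = c * Q ^ k)
    (hzero : ∀ n, 2 ≤ n → n ∉ resonantIndices m → a n = 0) {n : ℕ} (hn : 2 ≤ n) (hnm : n + 1 ≠ m) :
    a (n + 2) = Q * a n := by
  by_cases hmem : n ∈ resonantIndices m
  · obtain ⟨k, rfl⟩ := hmem
    calc a (m + 1 + 2 * (k + 1)) = c * Q ^ (k + 1) := hgeom (k + 1)
      _ = Q * a (m + 1 + 2 * k) := by rw [hgeom, pow_succ', mul_left_comm]
  · have hmem' : n + 2 ∉ resonantIndices m :=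
      add_two_mem_resonantIndices_iff.not.mpr (not_or.mpr ⟨hnm, hmem⟩)
    rw [hzero n hn hmem, hzero (n + 2) (by lia) hmem', mul_zero]

theorem recurrence_iff_exists_geometric [CommMonoidWithZero R] {a : ℕ → R} {Q : R} {m : ℕ}
    (hm : 3 ≤ m) :
    (a 2 = 0 ∧ a 3 = 0 ∧ ∀ n, 2 ≤ n → n + 1 ≠ m → a (n + 2) = Q * a n) ↔
      ∃ c : R, (∀ k, a (m + 1 + 2 * k) = c * Q ^ k) ∧
        ∀ n, 2 ≤ n → n ∉ resonantIndices m → a n = 0 := by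
  constructor
  · rintro ⟨h2, h3, hrec⟩
    exact ⟨a (m + 1),
      eq_mul_pow_of_recurrence fun n hn ↦ hrec n (by lia) (by lia),
      eq_zero_of_recurrence_of_notMem_resonantIndices h2 h3 hrec⟩
  · rintro ⟨c, hgeom, hzero⟩
    exact ⟨hzero 2 le_rfl (notMem_resonantIndices_of_le (by lia)),
      hzero 3 (by lia) (notMem_resonantIndices_of_le hm),
      fun n hn hnm ↦ recurrence_of_geometric hgeom hzero hn hnm⟩

end Recurrence

section Dispersion

variable {K : Type*} [Field K]

/-- The dispersion function `n ↦ 1 + Qⁿ - ((1 - Q²)/2) n` of the V-state operator linearized at the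
ellipse `{w + Q/w : w ∈ 𝕋}`; the mode `n` is resonant when it vanishes. -/
def dispersion (Q : K) (n : ℕ) : K :=
  1 + Q ^ n - (1 - Q ^ 2) / 2 * n

variable [LinearOrder K] [IsStrictOrderedRing K] {Q : K}

theorem dispersion_strictAnti (hQ₀ : 0 ≤ Q) (hQ₁ : Q < 1) : StrictAnti (dispersion Q) := by
  intro i j hij
  have hslope : 0 < (1 - Q ^ 2) / 2 := half_pos (sub_pos.mpr (pow_lt_one₀ hQ₀ hQ₁ two_ne_zero))
  have hpow : 1 + Q ^ j ≤ 1 + Q ^ i := by grw [pow_le_pow_of_le_one hQ₀ hQ₁.le hij.le]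
  have hlinear : (1 - Q ^ 2) / 2 * (i : K) < (1 - Q ^ 2) / 2 * j := by gcongr
  unfold dispersion
  linarith

theorem dispersion_eq_zero_iff_of_root (hQ₀ : 0 ≤ Q) (hQ₁ : Q < 1) {m : ℕ}
    (hroot : dispersion Q m = 0) (n : ℕ) : dispersion Q n = 0 ↔ n = m := by
  rw [← hroot, (dispersion_strictAnti hQ₀ hQ₁).injective.eq_iff]

theorem kernel_one_dimensional_general {m : ℕ} (hm : 3 ≤ m) (hQ₀ : 0 ≤ Q) (hQ₁ : Q < 1)
    (hroot : dispersion Q m = 0) (a : ℕ → K) :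
    (a 2 = 0 ∧ a 3 = 0 ∧ ∀ n, 3 ≤ n → dispersion Q n * (a (n + 1) - Q * a (n - 1)) = 0) ↔
      ∃ c : K, (∀ k, a (m + 1 + 2 * k) = c * Q ^ k) ∧
        ∀ n, 2 ≤ n → n ∉ resonantIndices m → a n = 0 := by
  rw [mul_sub_eq_zero_iff_recurrence fun n _ ↦ dispersion_eq_zero_iff_of_root hQ₀ hQ₁ hroot n]
  exact recurrence_iff_exists_geometric hm

end Dispersion

/-- Kernel characterization at a resonant `Q = Q_m`: for `m ≥ 3` and
`Q ∈ (0,1)` with `1 + Q^m - ((1-Q²)/2)m = 0`, a real sequence `(a_n)_{n≥2}`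
satisfies the linear system `[a₂ = 0, a₃ = 0, and
`(1 + Qⁿ - ((1-Q²)/2)n)(a_{n+1} - Q a_{n-1}) = 0` for all `n ≥ 3]`
iff there is `c ∈ ℝ` with `a_{m+1+2k} = c Q^k` for all `k ≥ 0` and `a_n = 0`
for every other index `n ≥ 2` (so the solution set is one-dimensional,
corresponding to `c·w^{m+1}/(1 - Qw²)`). -/
theorem kernel_one_dimensional (m : ℕ) (hm : 3 ≤ m) (Q : ℝ)
    (hQ : Q ∈ Set.Ioo (0:ℝ) 1)
    (hroot : 1 + Q ^ m - (1 - Q ^ 2) / 2 * m = 0) (a : ℕ → ℝ) :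
    (a 2 = 0 ∧ a 3 = 0 ∧
      ∀ n : ℕ, 3 ≤ n →
        (1 + Q ^ n - (1 - Q ^ 2) / 2 * n) * (a (n + 1) - Q * a (n - 1)) = 0)
    ↔ ∃ c : ℝ, (∀ k : ℕ, a (m + 1 + 2 * k) = c * Q ^ k) ∧
        ∀ n : ℕ, 2 ≤ n → (∀ k : ℕ, n ≠ m + 1 + 2 * k) → a n = 0 := by
  simpa only [dispersion, resonantIndices, Set.mem_ofPred_eq, not_exists] using
    kernel_one_dimensional_general hm hQ.1.le hQ.2 hroot a
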